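/- Let α ∈ (0,2), n ∈ ℕ (n ≥ 0), and x ∈ ℝ. Define SC_{2n+1}(x) = −Im μ_n(x) (the sine-like Christov function). Then y ↦ (SC_{2n+1}'(x−y) − SC_{2n+1}'(x+y))·y^(−α) is absolutely integrable on (0,∞), and (c_α/α)·∫₀^∞ (SC_{2n+1}'(x−y) − SC_{2n+1}'(x+y))·y^(−α) dy = (Γ(1+α)/(1+x²)^((n+1+α)/2))·cos((n+1+α)·arccot(x) − πα/2)·∑_{l≥0, 2l≤n} (−1)^l·C(n,2l)·x^(n−2l)·H_α(2l) + (Γ(1+α)/(1+x²)^((n+1+α)/2))·sin((n+1+α)·arccot(x) − πα/2)·∑_{l≥0, 2l+1≤n} (−1)^l·C(n,2l+1)·x^(n−1−2l)·H_α(2l+1). -/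

import Mathlib

open MeasureTheory Finset

/-- The constant `c_α = α·2^(α−1)·Γ(1/2+α/2)/(√π·Γ(1−α/2))`. -/
noncomputable def cFrac (α : ℝ) : ℝ :=
  α * 2 ^ (α - 1) * Real.Gamma (1 / 2 + α / 2) / (Real.sqrt Real.pi * Real.Gamma (1 - α / 2))

/-- The complex Higgins function `λ_n(x) = ((ix−1)/(ix+1))^n`. -/
noncomputable def higgins (n : ℤ) (x : ℝ) : ℂ :=
  ((Complex.I * (x : ℂ) - 1) / (Complex.I * (x : ℂ) + 1)) ^ n

/-- The derivative `λ_n'`. -/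
noncomputable def higgins' (n : ℤ) (x : ℝ) : ℂ := deriv (higgins n) x

/-- The complex Christov function `μ_n(x) = (ix−1)^n/(ix+1)^(n+1)`. -/
noncomputable def christov (n : ℤ) (x : ℝ) : ℂ :=
  (Complex.I * (x : ℂ) - 1) ^ n / (Complex.I * (x : ℂ) + 1) ^ (n + 1)

/-- The derivative `μ_n'`. -/
noncomputable def christov' (n : ℤ) (x : ℝ) : ℂ := deriv (christov n) x

/-- Generalized binomial coefficient `C(z,k) = z(z−1)⋯(z−k+1)/k!` over `ℂ`. -/
noncomputable def gbinom (z : ℂ) (k : ℕ) : ℂ :=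
  (∏ i ∈ Finset.range k, (z - (i : ℂ))) / (k.factorial : ℂ)

/-- Generalized binomial coefficient `C(z,k) = z(z−1)⋯(z−k+1)/k!` over `ℝ`. -/
noncomputable def gbinomR (z : ℝ) (k : ℕ) : ℝ :=
  (∏ i ∈ Finset.range k, (z - (i : ℝ))) / (k.factorial : ℝ)

/-- Rising factorial (Pochhammer symbol) `(z)_k = z(z+1)⋯(z+k−1)` over `ℂ`. -/
noncomputable def poch (z : ℂ) (k : ℕ) : ℂ := ∏ i ∈ Finset.range k, (z + (i : ℂ))

/-- `G_α(l) = (1/(l+1))·∑_{k=0}^{l} C(l+1,k+1)·C(−1−α,k)·2^k = ₂F₁(−l, 1+α; 2; 2)`, over `ℂ`. -/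
noncomputable def Gc (α : ℝ) (l : ℕ) : ℂ :=
  (1 / ((l : ℂ) + 1)) * ∑ k ∈ Finset.range (l + 1),
    gbinom ((l : ℂ) + 1) (k + 1) * gbinom (-1 - (α : ℂ)) k * 2 ^ k

/-- `G_α(l) = (1/(l+1))·∑_{k=0}^{l} C(l+1,k+1)·C(−1−α,k)·2^k = ₂F₁(−l, 1+α; 2; 2)`, over `ℝ`. -/
noncomputable def GR (α : ℝ) (l : ℕ) : ℝ :=
  (1 / ((l : ℝ) + 1)) * ∑ k ∈ Finset.range (l + 1),
    gbinomR ((l : ℝ) + 1) (k + 1) * gbinomR (-1 - α) k * 2 ^ k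

/-- `H_α(l) = ∑_{k=0}^{l} C(l,k)·C(−1−α,k)·2^k = ₂F₁(−l, 1+α; 1; 2)`, over `ℂ`. -/
noncomputable def Hc (α : ℝ) (l : ℕ) : ℂ :=
  ∑ k ∈ Finset.range (l + 1), gbinom (l : ℂ) k * gbinom (-1 - (α : ℂ)) k * 2 ^ k

/-- `H_α(l) = ∑_{k=0}^{l} C(l,k)·C(−1−α,k)·2^k = ₂F₁(−l, 1+α; 1; 2)`, over `ℝ`. -/
noncomputable def HR (α : ℝ) (l : ℕ) : ℝ :=
  ∑ k ∈ Finset.range (l + 1), gbinomR (l : ℝ) k * gbinomR (-1 - α) k * 2 ^ k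

/-- `arccot(x) = π/2 − arctan(x) ∈ (0,π)`. -/
noncomputable def arccot (x : ℝ) : ℝ := Real.pi / 2 - Real.arctan x

/-- The sine-like Christov function `SC_{2n+1}(x) = −Im μ_n(x)`. -/
noncomputable def SC (n : ℕ) (x : ℝ) : ℝ := -(christov (n : ℤ) x).im

/-- The derivative `SC_{2n+1}'`. -/
noncomputable def SC' (n : ℕ) (x : ℝ) : ℝ := deriv (SC n) x

/-!
The functions `(1 + ix)^(-p)` are, up to a constant, Laplace transforms
`∫ t^(p-1) e^(-t) e^(-ixt) dt`, that is, superpositions of the plane waves `e^(-ixt)`. Integration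
by parts rewrites the fractional Laplacian as a weighted integral of second differences, and
`∫ y^(-α-1) (1 - cos ty) dy = t^α / (2 c_α)` (obtained by writing `y^(-α-1)` as a superposition of
Gaussians) shows that it multiplies each plane wave by `t^α`. Hence it maps `(1 + ix)^(-p)` to
`Γ(p+α)/Γ(p) (1 + ix)^(-p-α)`. Expanding `(ix - 1)^n` in powers of `1 + ix` writes `μ_n` as a finite
combination of such functions with `p = k + 1`; re-expanding the result in powers of `ix` produces
the coefficients `H_α(l)`, and the polar form of `1 + ix` separates real and imaginary parts.
-/

/-! ### Integrals against powers on the half-line -/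

section

open Filter Topology Asymptotics

variable {E : Type*} [NormedAddCommGroup E] [NormedSpace ℝ E]

theorem locallyIntegrableOn_rpow_smul (c : ℝ) {f : ℝ → E}
    (hf : LocallyIntegrableOn f (Set.Ioi 0)) :
    LocallyIntegrableOn (fun t : ℝ => t ^ c • f t) (Set.Ioi 0) :=
  hf.continuousOn_smul isOpen_Ioi.isLocallyClosed
    (continuousOn_id.rpow_const fun _ ht => Or.inl (Set.mem_Ioi.mp ht).ne')

theorem isBigO_rpow_smul (c : ℝ) {r : ℝ} {f : ℝ → E} (hf : f =O[𝓝[>] 0] fun t => t ^ r) :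
    (fun t : ℝ => t ^ c • f t) =O[𝓝[>] 0] fun t => t ^ (c + r) := by
  refine ((isBigO_refl (fun t : ℝ => t ^ c) _).smul hf).congr' .rfl ?_
  filter_upwards [self_mem_nhdsWithin] with t ht
  exact (Real.rpow_add ht c r).symm

theorem integrableOn_rpow_smul_of_isBigO_nhdsGT_zero {c r : ℝ} {f : ℝ → E}
    (hf : LocallyIntegrableOn f (Set.Ioi 0)) (hzero : f =O[𝓝[>] 0] fun t => t ^ r)
    (hr : -1 < c + r) (htop : IntegrableAtFilter (fun t : ℝ => t ^ c • f t) atTop) :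
    IntegrableOn (fun t : ℝ => t ^ c • f t) (Set.Ioi 0) := by
  have hloc := locallyIntegrableOn_rpow_smul c hf
  refine integrableOn_Ioi_iff_integrableAtFilter_atTop_nhdsWithin.mpr ⟨htop, ?_, hloc⟩
  exact (isBigO_rpow_smul c hzero).integrableAtFilter
    ⟨_, self_mem_nhdsWithin, hloc.aestronglyMeasurable⟩
    ⟨_, Ioo_mem_nhdsGT one_pos, (intervalIntegral.integrableOn_Ioo_rpow_iff one_pos).mpr hr⟩

theorem integrableOn_rpow_smul_of_isBigO_one {c r : ℝ} {f : ℝ → E}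
    (hf : LocallyIntegrableOn f (Set.Ioi 0)) (hzero : f =O[𝓝[>] 0] fun t => t ^ r)
    (hr : -1 < c + r) (htop : f =O[atTop] fun _ => (1 : ℝ)) (hc : c < -1) :
    IntegrableOn (fun t : ℝ => t ^ c • f t) (Set.Ioi 0) := by
  refine integrableOn_rpow_smul_of_isBigO_nhdsGT_zero hf hzero hr ?_
  have hbound : (fun t : ℝ => t ^ c • f t) =O[atTop] fun t => t ^ c := by
    simpa using (isBigO_refl (fun t : ℝ => t ^ c) atTop).smul htop
  exact hbound.integrableAtFilter
    ⟨_, Ioi_mem_atTop 0, (locallyIntegrableOn_rpow_smul c hf).aestronglyMeasurable⟩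
    (integrableAtFilter_rpow_atTop_iff.mpr hc)

theorem integral_rpow_smul_deriv [CompleteSpace E] {β r : ℝ} (hβ : 0 < β) (hr : β < r)
    {f f' : ℝ → E} (hf : ∀ t ∈ Set.Ioi (0 : ℝ), HasDerivAt f (f' t) t)
    (hzero : f =O[𝓝[>] 0] fun t => t ^ r) (htop : f =O[atTop] fun _ => (1 : ℝ))
    (hf' : IntegrableOn (fun t : ℝ => t ^ (-β) • f' t) (Set.Ioi 0)) :
    ∫ t in Set.Ioi (0 : ℝ), t ^ (-β) • f' t =
      β • ∫ t in Set.Ioi (0 : ℝ), t ^ (-β - 1) • f t := by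
  have hint : IntegrableOn (fun t : ℝ => t ^ (-β - 1) • f t) (Set.Ioi 0) :=
    integrableOn_rpow_smul_of_isBigO_one
      (ContinuousOn.locallyIntegrableOn (fun t ht => (hf t ht).continuousAt.continuousWithinAt)
        measurableSet_Ioi) hzero (by linarith) htop (by linarith)
  have hint_smul : IntegrableOn (fun t : ℝ => β • t ^ (-β - 1) • f t) (Set.Ioi 0) := hint.smul β
  have hderiv : ∀ t ∈ Set.Ioi (0 : ℝ), HasDerivAt (fun t : ℝ => t ^ (-β) • f t)
      (t ^ (-β) • f' t - β • t ^ (-β - 1) • f t) t := fun t ht => by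
    refine ((Real.hasDerivAt_rpow_const (Or.inl (Set.mem_Ioi.mp ht).ne')).smul
      (hf t ht)).congr_deriv ?_
    rw [smul_smul, neg_mul, neg_smul, ← sub_eq_add_neg]
  have hcont : ContinuousWithinAt (fun t : ℝ => t ^ (-β) • f t) (Set.Ici 0) 0 := by
    rw [← continuousWithinAt_Ioi_iff_Ici, ContinuousWithinAt,
      Real.zero_rpow (neg_ne_zero.mpr hβ.ne'), zero_smul]
    have hpos : 0 < -β + r := by linarith
    refine (isBigO_rpow_smul (-β) hzero).trans_tendsto (((Real.continuousAt_rpow_const 0 (-β + r)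
      (Or.inr hpos.le)).tendsto.mono_left nhdsWithin_le_nhds).trans_eq ?_)
    rw [Real.zero_rpow hpos.ne']
  have hlim : Tendsto (fun t : ℝ => t ^ (-β) • f t) atTop (𝓝 0) :=
    ((isBigO_refl (fun t : ℝ => t ^ (-β)) atTop).smul htop).trans_tendsto
      (by simpa using tendsto_rpow_neg_atTop hβ)
  have hFTC := integral_Ioi_of_hasDerivAt_of_tendsto hcont hderiv (hf'.sub hint_smul) hlim
  rwa [integral_sub hf' hint_smul, Real.zero_rpow (neg_ne_zero.mpr hβ.ne'), zero_smul,
    sub_zero, sub_eq_zero, integral_smul] at hFTC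

end

/-! ### The symbol of the fractional Laplacian -/

section

open Filter Topology Asymptotics

theorem integral_rpow_mul_comp_mul_left (β : ℝ) {c : ℝ} (hc : 0 < c) (f : ℝ → ℝ) :
    ∫ t in Set.Ioi (0 : ℝ), t ^ (-β - 1) * f (c * t) =
      c ^ β * ∫ t in Set.Ioi (0 : ℝ), t ^ (-β - 1) * f t := by
  have hsub := integral_comp_mul_left_Ioi (fun t => t ^ (-β - 1) * f t) 0 hc
  have hpow : ∀ t ∈ Set.Ioi (0 : ℝ),
      (c * t) ^ (-β - 1) * f (c * t) = (c ^ β)⁻¹ * c⁻¹ * (t ^ (-β - 1) * f (c * t)) :=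
    fun t ht => by
      rw [Real.mul_rpow hc.le (Set.mem_Ioi.mp ht).le, Real.rpow_sub_one hc.ne',
        Real.rpow_neg hc.le, div_eq_mul_inv]
      ring
  rw [setIntegral_congr_fun measurableSet_Ioi hpow, integral_const_mul, mul_zero,
    smul_eq_mul] at hsub
  have hcβ : c ^ β ≠ 0 := (Real.rpow_pos_of_pos hc β).ne'
  have hc' := hc.ne'
  field_simp at hsub
  linarith

theorem integral_rpow_mul_exp_neg_mul_sq {s y : ℝ} (hs : 0 < s) (hy : 0 < y) :
    ∫ v in Set.Ioi (0 : ℝ), v ^ (s - 1) * Real.exp (-v * y ^ 2) =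
      Real.Gamma s * y ^ (-2 * s) := by
  simp_rw [neg_mul, mul_comm _ (y ^ 2)]
  rw [Real.integral_rpow_mul_exp_neg_mul_Ioi hs (by positivity), one_div, ← Real.rpow_natCast,
    ← Real.rpow_neg hy.le, ← Real.rpow_mul hy.le, mul_comm]
  push_cast
  ring_nf

theorem integrable_prod_rpow_mul_exp_neg_mul_sq_mul {s : ℝ} (hs : 0 < s) {f : ℝ → ℝ}
    (hfm : AEStronglyMeasurable f (volume.restrict (Set.Ioi 0)))
    (hf : IntegrableOn (fun y => y ^ (-2 * s) * f y) (Set.Ioi 0)) :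
    Integrable (Function.uncurry fun y v : ℝ => v ^ (s - 1) * Real.exp (-v * y ^ 2) * f y)
      ((volume.restrict (Set.Ioi 0)).prod (volume.restrict (Set.Ioi 0))) := by
  refine (integrable_prod_iff ?_).mpr ⟨?_, ?_⟩
  · exact (Measurable.aestronglyMeasurable (by fun_prop)).mul hfm.comp_fst
  · filter_upwards [ae_restrict_mem measurableSet_Ioi] with y (hy : 0 < y)
    have hkernel : IntegrableOn (fun v : ℝ => v ^ (s - 1) * Real.exp (-v * y ^ 2)) (Set.Ioi 0) := by
      refine .of_integral_ne_zero ?_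
      have := Real.Gamma_pos_of_pos hs
      rw [integral_rpow_mul_exp_neg_mul_sq hs hy]
      positivity
    exact hkernel.mul_const (f y)
  · refine (hf.norm.const_mul (Real.Gamma s)).congr ?_
    filter_upwards [ae_restrict_mem measurableSet_Ioi] with y (hy : 0 < y)
    have hnorm : ∀ v ∈ Set.Ioi (0 : ℝ), ‖v ^ (s - 1) * Real.exp (-v * y ^ 2) * f y‖ =
        v ^ (s - 1) * Real.exp (-v * y ^ 2) * ‖f y‖ := fun v (hv : 0 < v) => by
      rw [norm_mul, Real.norm_of_nonneg (by positivity)]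
    simp only [Function.uncurry_apply_pair]
    rw [setIntegral_congr_fun measurableSet_Ioi hnorm, integral_mul_const,
      integral_rpow_mul_exp_neg_mul_sq hs hy, norm_mul, Real.norm_of_nonneg (by positivity),
      mul_assoc]

theorem Gamma_mul_integral_rpow_mul {s : ℝ} (hs : 0 < s) {f : ℝ → ℝ}
    (hfm : AEStronglyMeasurable f (volume.restrict (Set.Ioi 0)))
    (hf : IntegrableOn (fun y => y ^ (-2 * s) * f y) (Set.Ioi 0)) :
    Real.Gamma s * ∫ y in Set.Ioi (0 : ℝ), y ^ (-2 * s) * f y =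
      ∫ v in Set.Ioi (0 : ℝ), v ^ (s - 1) *
        ∫ y in Set.Ioi (0 : ℝ), Real.exp (-v * y ^ 2) * f y := by
  have hkernel : ∀ y ∈ Set.Ioi (0 : ℝ), Real.Gamma s * (y ^ (-2 * s) * f y) =
      ∫ v in Set.Ioi (0 : ℝ), v ^ (s - 1) * Real.exp (-v * y ^ 2) * f y := fun y hy => by
    rw [integral_mul_const, integral_rpow_mul_exp_neg_mul_sq hs hy, mul_assoc]
  rw [← integral_const_mul, setIntegral_congr_fun measurableSet_Ioi hkernel,
    integral_integral_swap (integrable_prod_rpow_mul_exp_neg_mul_sq_mul hs hfm hf)]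
  simp_rw [mul_assoc, integral_const_mul]

theorem integral_exp_neg_mul_sq_mul_cos {b : ℝ} (hb : 0 < b) (t : ℝ) :
    ∫ y : ℝ, Real.exp (-b * y ^ 2) * Real.cos (t * y) =
      √(Real.pi / b) * Real.exp (-t ^ 2 / (4 * b)) := by
  have hfourier : ∫ y : ℝ, Complex.exp (Complex.I * t * y) * Complex.exp (-(b : ℂ) * y ^ 2) =
      ((√(Real.pi / b) * Real.exp (-t ^ 2 / (4 * b)) : ℝ) : ℂ) := by
    rw [fourierIntegral_gaussian (by simpa using hb), Real.sqrt_eq_rpow]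
    push_cast [Complex.ofReal_cpow (show 0 ≤ Real.pi / b by positivity)]
    rfl
  have hint : Integrable fun y : ℝ =>
      Complex.exp (Complex.I * t * y) * Complex.exp (-(b : ℂ) * y ^ 2) := by
    refine .of_integral_ne_zero (hfourier ▸ Complex.ofReal_ne_zero.mpr ?_)
    positivity
  have hre := integral_re hint
  rw [hfourier, RCLike.re_eq_complex_re, Complex.ofReal_re] at hre
  rw [← hre]
  refine integral_congr_ae (.of_forall fun y => ?_)
  have hreal : Complex.exp (Complex.I * t * y) * Complex.exp (-(b : ℂ) * y ^ 2) =
      (Real.exp (-b * y ^ 2) : ℂ) * Complex.exp ((t * y : ℝ) * Complex.I) := by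
    push_cast
    ring_nf
  simp only [hreal, Complex.re_ofReal_mul, Complex.exp_ofReal_mul_I_re]

theorem integral_exp_neg_mul_sq_mul_one_sub_cos {b : ℝ} (hb : 0 < b) (t : ℝ) :
    ∫ y in Set.Ioi (0 : ℝ), Real.exp (-b * y ^ 2) * (1 - Real.cos (t * y)) =
      √(Real.pi / b) / 2 * (1 - Real.exp (-t ^ 2 / (4 * b))) := by
  have hgauss := integrable_exp_neg_mul_sq hb
  have hcos : Integrable fun y : ℝ => Real.exp (-b * y ^ 2) * Real.cos (t * y) :=
    hgauss.mul_bdd (c := 1) (by fun_prop) (.of_forall fun y => Real.abs_cos_le_one _)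
  have heven := integral_comp_abs (f := fun y => Real.exp (-b * y ^ 2) * Real.cos (t * y))
  have habs : ∀ y : ℝ, Real.cos (t * |y|) = Real.cos (t * y) := fun y => by
    rcases abs_choice y with h | h <;> simp [h]
  simp only [sq_abs, habs, integral_exp_neg_mul_sq_mul_cos hb] at heven
  simp_rw [mul_sub, mul_one]
  rw [integral_sub hgauss.integrableOn hcos.integrableOn, integral_gaussian_Ioi]
  linarith

theorem integral_rpow_mul_one_sub_exp_neg {β : ℝ} (hβ : 0 < β) (hβ' : β < 1) :
    ∫ t in Set.Ioi (0 : ℝ), t ^ (-β - 1) * (1 - Real.exp (-t)) = Real.Gamma (1 - β) / β := by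
  have hderiv : ∀ t ∈ Set.Ioi (0 : ℝ),
      HasDerivAt (fun t : ℝ => 1 - Real.exp (-t)) (Real.exp (-t)) t := fun t _ => by
    simpa using ((hasDerivAt_neg t).exp.const_sub 1)
  have hzero : (fun t : ℝ => 1 - Real.exp (-t)) =O[𝓝[>] 0] fun t => t ^ (1 : ℝ) := by
    refine IsBigO.of_bound 1 ?_
    filter_upwards [self_mem_nhdsWithin] with t (ht : 0 < t)
    have hle := Real.one_sub_le_exp_neg t
    rw [Real.norm_of_nonneg (by simpa using ht.le), Real.rpow_one, Real.norm_of_nonneg ht.le]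
    linarith
  have htop : (fun t : ℝ => 1 - Real.exp (-t)) =O[atTop] fun _ => (1 : ℝ) := by
    refine IsBigO.of_bound 1 ?_
    filter_upwards [eventually_ge_atTop 0] with t ht
    rw [Real.norm_of_nonneg (by simpa using ht), norm_one]
    linarith [Real.exp_pos (-t)]
  have hΓ := Real.GammaIntegral_convergent (sub_pos.mpr hβ')
  simp_rw [sub_sub_cancel_left, mul_comm (Real.exp _)] at hΓ
  have hparts := integral_rpow_smul_deriv hβ hβ' hderiv hzero htop hΓ
  simp only [smul_eq_mul] at hparts
  rw [eq_div_iff hβ.ne', mul_comm, ← hparts, Real.Gamma_eq_integral (sub_pos.mpr hβ')]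
  simp_rw [sub_sub_cancel_left, mul_comm (Real.exp _)]

theorem integral_rpow_mul_one_sub_exp_neg_inv {β c : ℝ} (hβ : 0 < β) (hβ' : β < 1)
    (hc : 0 < c) :
    ∫ v in Set.Ioi (0 : ℝ), v ^ (β - 1) * (1 - Real.exp (-(c * v⁻¹))) =
      c ^ β * (Real.Gamma (1 - β) / β) := by
  rw [← integral_rpow_mul_one_sub_exp_neg hβ hβ', ← integral_rpow_mul_comp_mul_left β hc
    fun t => 1 - Real.exp (-t), ← integral_comp_rpow_Ioi _ (show (-1 : ℝ) ≠ 0 by norm_num)]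
  refine setIntegral_congr_fun measurableSet_Ioi fun t (ht : 0 < t) => ?_
  have hpow : t ^ (-1 - 1 : ℝ) * (t ^ (-1 : ℝ)) ^ (β - 1) = t ^ (-β - 1) := by
    rw [← Real.rpow_mul ht.le, ← Real.rpow_add ht]
    ring_nf
  simp only [abs_neg, abs_one, one_mul, smul_eq_mul, Real.rpow_neg_one, inv_inv] at hpow ⊢
  rw [← mul_assoc, hpow]

theorem integrableOn_rpow_mul_one_sub_cos {α : ℝ} (hα : α ∈ Set.Ioo (0 : ℝ) 2) :
    IntegrableOn (fun y : ℝ => y ^ (-α - 1) * (1 - Real.cos y)) (Set.Ioi 0) := by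
  have hnonneg (y : ℝ) : 0 ≤ 1 - Real.cos y := sub_nonneg.mpr (Real.cos_le_one y)
  refine integrableOn_rpow_smul_of_isBigO_one (r := 2) (f := fun y => 1 - Real.cos y)
    ((Continuous.locallyIntegrable (by fun_prop)).locallyIntegrableOn _) ?_
    (by linarith [hα.2]) ?_ (by linarith [hα.1])
  · refine IsBigO.of_bound (1 / 2) (.of_forall fun y => ?_)
    rw [Real.norm_of_nonneg (hnonneg y), Real.rpow_two, Real.norm_of_nonneg (sq_nonneg y)]
    linarith [Real.one_sub_sq_div_two_le_cos (x := y)]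
  · refine IsBigO.of_bound 2 (.of_forall fun y => ?_)
    rw [Real.norm_of_nonneg (hnonneg y), norm_one]
    linarith [Real.neg_one_le_cos y]

theorem cFrac_pos {α : ℝ} (hα : α ∈ Set.Ioo (0 : ℝ) 2) : 0 < cFrac α := by
  have hα₀ : 0 < α := hα.1
  have : 0 < Real.Gamma (1 / 2 + α / 2) := Real.Gamma_pos_of_pos (by linarith)
  have : 0 < Real.Gamma (1 - α / 2) := Real.Gamma_pos_of_pos (by linarith [hα.2])
  unfold cFrac
  positivity

theorem integral_rpow_mul_one_sub_cos {α : ℝ} (hα : α ∈ Set.Ioo (0 : ℝ) 2) :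
    ∫ y in Set.Ioi (0 : ℝ), y ^ (-α - 1) * (1 - Real.cos y) = (2 * cFrac α)⁻¹ := by
  obtain ⟨hα₀, hα₂⟩ := hα
  have hs : (0 : ℝ) < 1 / 2 + α / 2 := by linarith
  have hexp : -2 * (1 / 2 + α / 2) = -α - 1 := by ring
  have hsubord := Gamma_mul_integral_rpow_mul hs (f := fun y => 1 - Real.cos y)
    (Continuous.aestronglyMeasurable (by fun_prop))
    (hexp ▸ integrableOn_rpow_mul_one_sub_cos ⟨hα₀, hα₂⟩)
  have hgauss : ∀ v ∈ Set.Ioi (0 : ℝ), v ^ (1 / 2 + α / 2 - 1) *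
      ∫ y in Set.Ioi (0 : ℝ), Real.exp (-v * y ^ 2) * (1 - Real.cos y) =
      √Real.pi / 2 * (v ^ (α / 2 - 1) * (1 - Real.exp (-(1 / 4 * v⁻¹)))) :=
    fun v (hv : 0 < v) => by
      have hcos := integral_exp_neg_mul_sq_mul_one_sub_cos hv 1
      have harg : -1 ^ 2 / (4 * v) = -(1 / 4 * v⁻¹) := by ring
      have hpow : v ^ (1 / 2 + α / 2 - 1) = √v * v ^ (α / 2 - 1) := by
        rw [Real.sqrt_eq_rpow, ← Real.rpow_add hv, add_sub_assoc]
      have hsqrt : √v ≠ 0 := (Real.sqrt_pos.mpr hv).ne'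
      simp only [one_mul] at hcos
      rw [hcos, harg, hpow, Real.sqrt_div Real.pi_pos.le]
      field_simp
  have hquarter : (1 / 4 : ℝ) ^ (α / 2) = (2 ^ α)⁻¹ := by
    rw [show (1 / 4 : ℝ) = 2 ^ (-2 : ℝ) by norm_num [Real.rpow_neg], ← Real.rpow_mul two_pos.le,
      ← Real.rpow_neg two_pos.le]
    ring_nf
  rw [hexp, setIntegral_congr_fun measurableSet_Ioi hgauss, integral_const_mul,
    integral_rpow_mul_one_sub_exp_neg_inv (half_pos hα₀) (by linarith) (by norm_num),
    hquarter] at hsubord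
  have : Real.Gamma (1 / 2 + α / 2) ≠ 0 := (Real.Gamma_pos_of_pos hs).ne'
  have : Real.Gamma (1 - α / 2) ≠ 0 := (Real.Gamma_pos_of_pos (by linarith)).ne'
  have htwo : (2 : ℝ) ^ α ≠ 0 := by positivity
  rw [cFrac, Real.rpow_sub_one two_ne_zero]
  field_simp at hsubord ⊢
  linarith

theorem integral_rpow_mul_one_sub_cos_mul {α : ℝ} (hα : α ∈ Set.Ioo (0 : ℝ) 2) {t : ℝ}
    (ht : 0 < t) :
    ∫ y in Set.Ioi (0 : ℝ), y ^ (-α - 1) * (1 - Real.cos (t * y)) = t ^ α / (2 * cFrac α) := by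
  rw [integral_rpow_mul_comp_mul_left α ht fun y => 1 - Real.cos y,
    integral_rpow_mul_one_sub_cos hα, div_eq_mul_inv]

end

/-! ### Complex Laplace transforms of powers -/

section

open Filter Topology ProbabilityTheory

theorem integrableOn_rpow_mul_exp_neg_mul {a b : ℝ} (ha : 0 < a) (hb : 0 < b) :
    IntegrableOn (fun t : ℝ => t ^ (a - 1) * Real.exp (-b * t)) (Set.Ioi 0) := by
  simpa using integrableOn_rpow_mul_exp_neg_mul_rpow (by linarith : -1 < a - 1) one_pos hb

theorem analyticOnNhd_integral_rpow_smul_cexp_neg_mul {a : ℝ} (ha : 0 < a) :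
    AnalyticOnNhd ℂ
      (fun s : ℂ => ∫ t in Set.Ioi (0 : ℝ), t ^ (a - 1) • Complex.exp (-s * t)) {s | 0 < s.re} := by
  set μ := (volume.restrict (Set.Ioi (0 : ℝ))).withDensity fun t => ENNReal.ofReal (t ^ (a - 1))
  have hdensity : ∀ᵐ t : ℝ ∂volume.restrict (Set.Ioi 0),
      (ENNReal.ofReal (t ^ (a - 1))).toReal = t ^ (a - 1) := by
    filter_upwards [ae_restrict_mem measurableSet_Ioi] with t ht
    exact ENNReal.toReal_ofReal (Real.rpow_nonneg (Set.mem_Ioi.mp ht).le _)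
  have hmgf : (fun s : ℂ => ∫ t in Set.Ioi (0 : ℝ), t ^ (a - 1) • Complex.exp (-s * t)) =
      complexMGF (fun t => -t) μ := by
    ext s
    rw [complexMGF, integral_withDensity_eq_integral_toReal_smul (by fun_prop) (by simp)]
    refine integral_congr_ae ?_
    filter_upwards [hdensity] with t ht
    simp [ht]
  have hset : Set.Ioi 0 ⊆ integrableExpSet (fun t => -t) μ := fun b hb => by
    rw [integrableExpSet, Set.mem_ofPred_eq,
      integrable_withDensity_iff_integrable_smul' (by fun_prop) (by simp)]
    refine (integrableOn_rpow_mul_exp_neg_mul ha hb).congr ?_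
    filter_upwards [hdensity] with t ht
    simp [ht]
  rw [hmgf]
  exact analyticOnNhd_complexMGF.mono fun s hs => interior_maximal hset isOpen_Ioi hs

theorem integral_rpow_smul_cexp_neg_mul {a : ℝ} (ha : 0 < a) {s : ℂ} (hs : 0 < s.re) :
    ∫ t in Set.Ioi (0 : ℝ), t ^ (a - 1) • Complex.exp (-s * t) =
      Real.Gamma a * s ^ (-(a : ℂ)) := by
  have hanalytic : AnalyticOnNhd ℂ (fun s : ℂ => Real.Gamma a * s ^ (-(a : ℂ))) {s | 0 < s.re} :=
    fun s hs => analyticAt_const.mul (analyticAt_id.cpow analyticAt_const (Or.inl hs))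
  have hreal : ∀ b : ℝ, 0 < b →
      ∫ t in Set.Ioi (0 : ℝ), t ^ (a - 1) • Complex.exp (-(b : ℂ) * t) =
        Real.Gamma a * (b : ℂ) ^ (-(a : ℂ)) := fun b hb => by
    have h := congrArg ((↑) : ℝ → ℂ) (Real.integral_rpow_mul_exp_neg_mul_Ioi ha hb)
    rw [← integral_complex_ofReal, one_div, Real.inv_rpow hb.le, ← Real.rpow_neg hb.le,
      mul_comm] at h
    push_cast [Complex.ofReal_cpow hb.le] at h
    rw [← h]
    refine integral_congr_ae (.of_forall fun t => ?_)
    simp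
  have hfreq : ∃ᶠ b : ℂ in 𝓝[≠] 1, ∫ t in Set.Ioi (0 : ℝ), t ^ (a - 1) • Complex.exp (-b * t) =
      Real.Gamma a * b ^ (-(a : ℂ)) := by
    have htendsto : Tendsto ((↑) : ℝ → ℂ) (𝓝[>] 1) (𝓝[≠] 1) :=
      Complex.continuous_ofReal.continuousWithinAt.tendsto_nhdsWithin fun b hb => by
        simpa using (Set.mem_Ioi.mp hb).ne'
    refine htendsto.frequently (Eventually.frequently ?_)
    filter_upwards [self_mem_nhdsWithin] with b hb using hreal b (one_pos.trans hb)
  exact (analyticOnNhd_integral_rpow_smul_cexp_neg_mul ha).eqOn_of_preconnected_of_frequently_eq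
    hanalytic (convex_halfSpace_re_gt 0).isPreconnected (by simp : (1 : ℂ) ∈ {s | 0 < s.re})
    hfreq hs

end

/-! ### The fractional Laplacian -/

section

open Filter Topology Asymptotics

variable {E F : Type*} [NormedAddCommGroup E] [NormedSpace ℝ E]
  [NormedAddCommGroup F] [NormedSpace ℝ F]

/-- `HasFracLapAt α u v x` says that the fractional Laplacian `(-Δ)^(α/2) u` exists at `x`, as an
absolutely convergent integral, and equals `v`. Absolute convergence is part of the definition
because a divergent Bochner integral has the junk value `0`. -/
def HasFracLapAt (α : ℝ) (u : ℝ → E) (v : E) (x : ℝ) : Prop :=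
  IntegrableOn (fun y : ℝ => y ^ (-α) • (deriv u (x - y) - deriv u (x + y))) (Set.Ioi 0) ∧
    (cFrac α / α) • ∫ y in Set.Ioi (0 : ℝ), y ^ (-α) • (deriv u (x - y) - deriv u (x + y)) = v

theorem HasFracLapAt.clm_comp [CompleteSpace E] [CompleteSpace F] {α x : ℝ} {u : ℝ → E} {v : E}
    (h : HasFracLapAt α u v x) (hu : Differentiable ℝ u) (L : E →L[ℝ] F) :
    HasFracLapAt α (fun y => L (u y)) (L v) x := by
  obtain ⟨hint, rfl⟩ := h
  have hderiv (y : ℝ) : deriv (fun y => L (u y)) y = L (deriv u y) :=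
    (L.hasFDerivAt.comp_hasDerivAt y (hu y).hasDerivAt).deriv
  have hcomp := L.integrable_comp hint
  simp only [map_smul, map_sub] at hcomp
  simp only [HasFracLapAt, hderiv]
  refine ⟨hcomp, ?_⟩
  rw [map_smul, ← L.integral_comp_comm hint]
  simp only [map_smul, map_sub]

theorem HasFracLapAt.sum {ι : Type*} {s : Finset ι} {α x : ℝ} {u : ι → ℝ → E}
    {v : ι → E} (h : ∀ i ∈ s, HasFracLapAt α (u i) (v i) x)
    (hu : ∀ i ∈ s, Differentiable ℝ (u i)) :
    HasFracLapAt α (fun y => ∑ i ∈ s, u i y) (∑ i ∈ s, v i) x := by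
  have hderiv (y : ℝ) : deriv (fun y => ∑ i ∈ s, u i y) y = ∑ i ∈ s, deriv (u i) y :=
    deriv_fun_sum fun i hi => hu i hi y
  simp only [HasFracLapAt, hderiv, ← Finset.sum_sub_distrib, Finset.smul_sum]
  refine ⟨integrable_finsetSum s fun i hi => (h i hi).1, ?_⟩
  rw [integral_finsetSum s fun i hi => (h i hi).1, Finset.smul_sum]
  exact Finset.sum_congr rfl fun i hi => (h i hi).2

theorem isBigO_sq_of_hasDerivAt {f f' : ℝ → E} (hf : ∀ t, HasDerivAt f (f' t) t) (hf₀ : f 0 = 0)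
    (hf' : f' =O[𝓝 0] fun t => t) : f =O[𝓝[>] 0] fun t => t ^ 2 := by
  obtain ⟨C, hC₀, hC⟩ := hf'.exists_nonneg
  obtain ⟨δ, hδ, hball⟩ := Metric.eventually_nhds_iff.mp hC.bound
  refine IsBigO.of_bound C ?_
  filter_upwards [Ioo_mem_nhdsGT hδ] with t ht
  have hbound : ∀ τ ∈ Set.Ico 0 t, ‖f' τ‖ ≤ C * t := fun τ hτ => by
    refine (hball (by simpa [abs_of_nonneg hτ.1] using hτ.2.trans ht.2)).trans ?_
    rw [Real.norm_of_nonneg hτ.1]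
    exact mul_le_mul_of_nonneg_left hτ.2.le hC₀
  have hmean := norm_image_sub_le_of_norm_deriv_le_segment'
    (fun τ _ => (hf τ).hasDerivWithinAt) hbound t ⟨ht.1.le, le_rfl⟩
  rw [hf₀, sub_zero, sub_zero] at hmean
  rwa [norm_pow, Real.norm_of_nonneg ht.1.le, sq, ← mul_assoc]

theorem hasFracLapAt_integral_secondDifference [CompleteSpace E] {α x : ℝ}
    (hα : α ∈ Set.Ioo (0 : ℝ) 2) {u : ℝ → E} (hu : Differentiable ℝ u)
    (hint : Integrable (deriv u)) (hx : DifferentiableAt ℝ (deriv u) x) :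
    HasFracLapAt α u (cFrac α • ∫ y in Set.Ioi (0 : ℝ),
      y ^ (-α - 1) • ((2 : ℝ) • u x - u (x - y) - u (x + y))) x := by
  set D : ℝ → E := fun y => (2 : ℝ) • u x - u (x - y) - u (x + y)
  set D' : ℝ → E := fun y => deriv u (x - y) - deriv u (x + y) with hD'
  have hderiv : ∀ y, HasDerivAt D (D' y) y := fun y => by
    have hleft := (hu (x - y)).hasDerivAt.comp_const_sub x y
    have hright := (hu (x + y)).hasDerivAt.comp_const_add x y
    exact ((hleft.const_sub ((2 : ℝ) • u x)).sub hright).congr_deriv (by simp [hD'])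
  have hD'_int : Integrable D' := (hint.comp_sub_left x).sub (hint.comp_add_left x)
  have hD'_zero : D' =O[𝓝 0] fun y => y := by
    have hleft : DifferentiableAt ℝ (fun y => deriv u (x - y)) 0 :=
      differentiableAt_comp_const_sub.mpr (by simpa using hx)
    have hright : DifferentiableAt ℝ (fun y => deriv u (x + y)) 0 :=
      (differentiableAt_comp_add_left x).mpr (by simpa using hx)
    simpa [hD'] using (hleft.fun_sub hright).isBigO_sub
  have hD_zero : D =O[𝓝[>] 0] fun y => y ^ (2 : ℝ) := by
    simpa using isBigO_sq_of_hasDerivAt hderiv (by simp [D, two_smul]) hD'_zero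
  have hD_top : D =O[atTop] fun _ => (1 : ℝ) :=
    (tendsto_limUnder_of_hasDerivAt_of_integrableOn_Ioi (a := 0) (fun y _ => hderiv y)
      hD'_int.integrableOn).isBigO_one ℝ
  have hint' : IntegrableOn (fun y : ℝ => y ^ (-α) • D' y) (Set.Ioi 0) := by
    refine integrableOn_rpow_smul_of_isBigO_nhdsGT_zero (r := 1)
      (hD'_int.locallyIntegrable.locallyIntegrableOn _)
      (by simpa using hD'_zero.mono nhdsWithin_le_nhds) (by linarith [hα.2]) ?_
    have hbound : (fun y : ℝ => y ^ (-α) • D' y) =O[atTop] D' := by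
      simpa using ((tendsto_rpow_neg_atTop hα.1).isBigO_one ℝ).smul (isBigO_refl D' atTop)
    refine hbound.integrableAtFilter ⟨Set.univ, univ_mem, ?_⟩ (hD'_int.integrableAtFilter _)
    have hpow : Measurable fun y : ℝ => y ^ (-α) := by fun_prop
    exact (hpow.aestronglyMeasurable.smul hD'_int.aestronglyMeasurable).restrict
  refine ⟨hint', ?_⟩
  rw [integral_rpow_smul_deriv hα.1 hα.2 (fun y _ => hderiv y) hD_zero hD_top hint', smul_smul,
    div_mul_cancel₀ _ hα.1.ne']

end

/-! ### Second differences of complex powers -/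

theorem integrableOn_rpow_smul_cexp_neg_mul {a : ℝ} (ha : 0 < a) {s : ℂ} (hs : 0 < s.re) :
    IntegrableOn (fun t : ℝ => t ^ (a - 1) • Complex.exp (-s * t)) (Set.Ioi 0) := by
  refine (integrableOn_rpow_mul_exp_neg_mul ha hs).mono'
    (Measurable.aestronglyMeasurable (by fun_prop)) ?_
  filter_upwards [ae_restrict_mem measurableSet_Ioi] with t ht
  simp [Complex.norm_exp, Real.abs_rpow_of_nonneg (Set.mem_Ioi.mp ht).le,
    abs_of_pos (Set.mem_Ioi.mp ht)]

theorem Gamma_mul_secondDifference_cpow {p : ℝ} (hp : 0 < p) {s : ℂ} (hs : 0 < s.re) (y : ℝ) :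
    Real.Gamma p * (2 * s ^ (-(p : ℂ)) - (s - Complex.I * y) ^ (-(p : ℂ)) -
        (s + Complex.I * y) ^ (-(p : ℂ))) =
      2 * ∫ t in Set.Ioi (0 : ℝ), (1 - Real.cos (t * y)) • t ^ (p - 1) • Complex.exp (-s * t) := by
  have hleft : 0 < (s - Complex.I * y).re := by simpa using hs
  have hright : 0 < (s + Complex.I * y).re := by simpa using hs
  have hcos (t : ℝ) : 2 * (1 - Real.cos (t * y)) • t ^ (p - 1) • Complex.exp (-s * t) =
      2 * t ^ (p - 1) • Complex.exp (-s * t) - t ^ (p - 1) • Complex.exp (-(s - Complex.I * y) * t)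
        - t ^ (p - 1) • Complex.exp (-(s + Complex.I * y) * t) := by
    have hexp_left : Complex.exp (-(s - Complex.I * y) * t) =
        Complex.exp (-s * t) * Complex.exp (t * y * Complex.I) := by
      rw [← Complex.exp_add]
      ring_nf
    have hexp_right : Complex.exp (-(s + Complex.I * y) * t) =
        Complex.exp (-s * t) * Complex.exp (-(t * y) * Complex.I) := by
      rw [← Complex.exp_add]
      ring_nf
    simp only [hexp_left, hexp_right, Complex.real_smul]
    push_cast
    linear_combination -((t ^ (p - 1) : ℝ) : ℂ) * Complex.exp (-s * t) * Complex.two_cos (t * y)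
  rw [← integral_const_mul]
  simp_rw [hcos]
  rw [integral_sub, integral_sub, integral_const_mul, integral_rpow_smul_cexp_neg_mul hp hs,
    integral_rpow_smul_cexp_neg_mul hp hleft, integral_rpow_smul_cexp_neg_mul hp hright]
  · ring
  · exact (integrableOn_rpow_smul_cexp_neg_mul hp hs).const_mul 2
  · exact integrableOn_rpow_smul_cexp_neg_mul hp hleft
  · exact ((integrableOn_rpow_smul_cexp_neg_mul hp hs).const_mul 2).sub
      (integrableOn_rpow_smul_cexp_neg_mul hp hleft)
  · exact integrableOn_rpow_smul_cexp_neg_mul hp hright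

theorem integrable_prod_one_sub_cos_smul_cexp {α p : ℝ} (hα : α ∈ Set.Ioo (0 : ℝ) 2) (hp : 0 < p)
    {s : ℂ} (hs : 0 < s.re) :
    Integrable (Function.uncurry fun t y : ℝ =>
        (y ^ (-α - 1) * (1 - Real.cos (t * y))) • t ^ (p - 1) • Complex.exp (-s * t))
      ((volume.restrict (Set.Ioi 0)).prod (volume.restrict (Set.Ioi 0))) := by
  refine (integrable_prod_iff (Measurable.aestronglyMeasurable (by fun_prop))).mpr ⟨?_, ?_⟩
  · filter_upwards [ae_restrict_mem measurableSet_Ioi] with t (ht : 0 < t)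
    have hcos : IntegrableOn (fun y => y ^ (-α - 1) * (1 - Real.cos (t * y))) (Set.Ioi 0) := by
      refine .of_integral_ne_zero ?_
      have := cFrac_pos hα
      rw [integral_rpow_mul_one_sub_cos_mul hα ht]
      positivity
    exact hcos.smul_const (t ^ (p - 1) • Complex.exp (-s * t))
  · refine ((integrableOn_rpow_mul_exp_neg_mul (add_pos hp hα.1) hs).const_mul
      (2 * cFrac α)⁻¹).congr ?_
    filter_upwards [ae_restrict_mem measurableSet_Ioi] with t (ht : 0 < t)
    have hnorm : ∀ y ∈ Set.Ioi (0 : ℝ),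
        ‖(y ^ (-α - 1) * (1 - Real.cos (t * y))) • t ^ (p - 1) • Complex.exp (-s * t)‖ =
          y ^ (-α - 1) * (1 - Real.cos (t * y)) * (t ^ (p - 1) * Real.exp (-s.re * t)) :=
      fun y (hy : 0 < y) => by
        rw [norm_smul, norm_smul, Real.norm_of_nonneg, Real.norm_of_nonneg, Complex.norm_exp]
        · simp
        · positivity
        · exact mul_nonneg (by positivity) (sub_nonneg.mpr (Real.cos_le_one _))
    simp only [Function.uncurry_apply_pair]
    rw [setIntegral_congr_fun measurableSet_Ioi hnorm, integral_mul_const,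
      integral_rpow_mul_one_sub_cos_mul hα ht, add_sub_right_comm, Real.rpow_add ht]
    ring

theorem integral_rpow_smul_secondDifference_cpow {α p : ℝ} (hα : α ∈ Set.Ioo (0 : ℝ) 2)
    (hp : 0 < p) {s : ℂ} (hs : 0 < s.re) :
    cFrac α • ∫ y in Set.Ioi (0 : ℝ), y ^ (-α - 1) • (2 * s ^ (-(p : ℂ)) -
        (s - Complex.I * y) ^ (-(p : ℂ)) - (s + Complex.I * y) ^ (-(p : ℂ))) =
      (Real.Gamma (p + α) / Real.Gamma p : ℝ) * s ^ (-((p + α : ℝ) : ℂ)) := by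
  have hΓ : (Real.Gamma p : ℂ) ≠ 0 := Complex.ofReal_ne_zero.mpr (Real.Gamma_pos_of_pos hp).ne'
  have hc : cFrac α ≠ 0 := (cFrac_pos hα).ne'
  have hlaplace (y : ℝ) : y ^ (-α - 1) • (2 * s ^ (-(p : ℂ)) - (s - Complex.I * y) ^ (-(p : ℂ)) -
      (s + Complex.I * y) ^ (-(p : ℂ))) = (2 / Real.Gamma p : ℂ) * ∫ t in Set.Ioi (0 : ℝ),
        (y ^ (-α - 1) * (1 - Real.cos (t * y))) • t ^ (p - 1) • Complex.exp (-s * t) := by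
    simp_rw [mul_smul]
    rw [integral_smul, mul_smul_comm, div_mul_eq_mul_div, ← Gamma_mul_secondDifference_cpow hp hs,
      mul_div_cancel_left₀ _ hΓ]
  have hinner : ∀ t ∈ Set.Ioi (0 : ℝ), ∫ y in Set.Ioi (0 : ℝ),
      (y ^ (-α - 1) * (1 - Real.cos (t * y))) • t ^ (p - 1) • Complex.exp (-s * t) =
        (2 * cFrac α)⁻¹ • t ^ (p + α - 1) • Complex.exp (-s * t) := fun t (ht : 0 < t) => by
    rw [integral_smul_const, integral_rpow_mul_one_sub_cos_mul hα ht, smul_smul, smul_smul,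
      add_sub_right_comm, Real.rpow_add ht]
    ring_nf
  calc cFrac α • ∫ y in Set.Ioi (0 : ℝ), y ^ (-α - 1) • (2 * s ^ (-(p : ℂ)) -
        (s - Complex.I * y) ^ (-(p : ℂ)) - (s + Complex.I * y) ^ (-(p : ℂ)))
      = cFrac α • ((2 / Real.Gamma p : ℂ) * ∫ t in Set.Ioi (0 : ℝ), ∫ y in Set.Ioi (0 : ℝ),
          (y ^ (-α - 1) * (1 - Real.cos (t * y))) • t ^ (p - 1) • Complex.exp (-s * t)) := by
        simp_rw [hlaplace]
        rw [integral_const_mul,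
          integral_integral_swap (integrable_prod_one_sub_cos_smul_cexp hα hp hs)]
    _ = cFrac α • ((2 / Real.Gamma p : ℂ) *
          ((2 * cFrac α)⁻¹ • (Real.Gamma (p + α) * s ^ (-((p + α : ℝ) : ℂ))))) := by
        rw [setIntegral_congr_fun measurableSet_Ioi hinner, integral_smul,
          integral_rpow_smul_cexp_neg_mul (add_pos hp hα.1) hs]
    _ = _ := by
        have hc' : (cFrac α : ℂ) ≠ 0 := Complex.ofReal_ne_zero.mpr hc
        simp only [Complex.real_smul]
        push_cast
        field_simp

/-! ### Powers of `1 + ix` -/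

theorem norm_one_add_I_mul (x : ℝ) : ‖1 + Complex.I * x‖ = √(1 + x ^ 2) := by
  rw [mul_comm]
  simpa using Complex.norm_add_mul_I 1 x

theorem one_add_I_mul_mem_slitPlane (x : ℝ) : 1 + Complex.I * x ∈ Complex.slitPlane :=
  .inl (by simp)

theorem hasDerivAt_one_add_I_mul_cpow (w : ℂ) (x : ℝ) :
    HasDerivAt (fun x : ℝ => (1 + Complex.I * x) ^ w)
      (w * Complex.I * (1 + Complex.I * x) ^ (w - 1)) x := by
  have hlin : HasDerivAt (fun z : ℂ => 1 + Complex.I * z) Complex.I x := by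
    simpa using ((hasDerivAt_id (x : ℂ)).const_mul Complex.I).const_add 1
  convert (hlin.cpow_const (c := w) (one_add_I_mul_mem_slitPlane x)).comp_ofReal using 1
  rw [mul_right_comm]

theorem integrable_one_add_I_mul_cpow {r : ℝ} (hr : 1 < r) :
    Integrable fun x : ℝ => (1 + Complex.I * x) ^ (-(r : ℂ)) := by
  have hcont : Continuous fun x : ℝ => (1 + Complex.I * x) ^ (-(r : ℂ)) :=
    continuous_iff_continuousAt.mpr fun x => (hasDerivAt_one_add_I_mul_cpow _ x).continuousAt
  have hdecay := integrable_rpow_neg_one_add_norm_sq (E := ℝ) (μ := volume) (r := r) (by simpa)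
  refine hdecay.mono' hcont.aestronglyMeasurable (.of_forall fun x => ?_)
  have hpos : 0 ≤ 1 + x ^ 2 := by positivity
  rw [← Complex.ofReal_neg, Complex.norm_cpow_real, norm_one_add_I_mul, Real.sqrt_eq_rpow,
    ← Real.rpow_mul hpos, Real.norm_eq_abs, sq_abs]
  exact le_of_eq (by ring_nf)

theorem hasFracLapAt_one_add_I_mul_cpow {α p : ℝ} (hα : α ∈ Set.Ioo (0 : ℝ) 2) (hp : 0 < p)
    (x : ℝ) :
    HasFracLapAt α (fun x : ℝ => (1 + Complex.I * x) ^ (-(p : ℂ)))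
      ((Real.Gamma (p + α) / Real.Gamma p : ℝ) * (1 + Complex.I * x) ^ (-((p + α : ℝ) : ℂ))) x := by
  have hderiv : deriv (fun x : ℝ => (1 + Complex.I * x) ^ (-(p : ℂ))) = fun x : ℝ =>
      -p * Complex.I * (1 + Complex.I * x) ^ (-((p + 1 : ℝ) : ℂ)) := by
    ext y
    rw [(hasDerivAt_one_add_I_mul_cpow _ y).deriv]
    push_cast
    ring_nf
  have hre : 0 < (1 + Complex.I * x).re := by simp
  rw [← integral_rpow_smul_secondDifference_cpow hα hp hre]
  convert hasFracLapAt_integral_secondDifference (x := x) hα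
    (fun y => (hasDerivAt_one_add_I_mul_cpow (-(p : ℂ)) y).differentiableAt) ?_ ?_ using 7 with y
  · simp
  · rw [Complex.ofReal_sub, mul_sub, add_sub]
  · rw [Complex.ofReal_add, mul_add, add_assoc]
  · rw [hderiv]
    exact (integrable_one_add_I_mul_cpow (by linarith)).const_mul _
  · rw [hderiv]
    exact (hasDerivAt_one_add_I_mul_cpow _ x).differentiableAt.const_mul _

/-! ### Christov functions -/

open Polynomial in
theorem sum_choose_mul_add_pow {R : Type*} [CommSemiring R] (g : ℕ → R) (w z : R) (n : ℕ) :
    ∑ k ∈ range (n + 1), n.choose k * g k * (w + z) ^ (n - k) =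
      ∑ l ∈ range (n + 1), n.choose l * z ^ (n - l) *
        ∑ k ∈ range (l + 1), l.choose k * g k * w ^ (l - k) := by
  set L : R[X] →ₗ[R] R := (basisMonomials R).constr R g
  have hX (k : ℕ) : L (X ^ k) = g k := by
    simpa [X_pow_eq_monomial] using (basisMonomials R).constr_basis R g k
  have hL (a : R) (m : ℕ) :
      L ((X + C a) ^ m) = ∑ k ∈ range (m + 1), m.choose k * g k * a ^ (m - k) := by
    rw [add_pow, map_sum]
    refine sum_congr rfl fun k _ => ?_
    rw [← C_pow, mul_assoc, ← C_eq_natCast, ← C_mul, mul_comm, ← smul_eq_C_mul, map_smul, hX,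
      smul_eq_mul]
    ring
  calc ∑ k ∈ range (n + 1), n.choose k * g k * (w + z) ^ (n - k)
      = L ((X + C w + C z) ^ n) := by rw [add_assoc, ← C_add, hL]
    _ = ∑ l ∈ range (n + 1), n.choose l * z ^ (n - l) * L ((X + C w) ^ l) := by
        rw [add_pow, map_sum]
        refine sum_congr rfl fun l _ => ?_
        rw [← C_pow, mul_assoc, ← C_eq_natCast, ← C_mul, mul_comm, ← smul_eq_C_mul, map_smul,
          smul_eq_mul, mul_comm (z ^ _)]
    _ = _ := by simp only [hL]

theorem sum_range_succ_eq_sum_even_add_sum_odd {M : Type*} [AddCommMonoid M] (f : ℕ → M) (n : ℕ) :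
    ∑ j ∈ range (n + 1), f j = ∑ l ∈ range (n + 1) with 2 * l ≤ n, f (2 * l) +
      ∑ l ∈ range (n + 1) with 2 * l + 1 ≤ n, f (2 * l + 1) := by
  rw [← sum_filter_add_sum_filter_not (range (n + 1)) Even]
  congr 1
  · refine (sum_nbij' (2 * ·) (· / 2) ?_ ?_ ?_ ?_ fun _ _ => rfl).symm <;> grind
  · refine (sum_nbij' (2 * · + 1) (· / 2) ?_ ?_ ?_ ?_ fun _ _ => rfl).symm <;> grind

theorem sum_choose_mul_I_mul_pow (h : ℕ → ℝ) (n : ℕ) (x : ℝ) :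
    ∑ l ∈ range (n + 1), n.choose l * (Complex.I * x) ^ (n - l) * h l =
      Complex.I ^ n *
        ((∑ l ∈ range (n + 1) with 2 * l ≤ n,
            (-1) ^ l * n.choose (2 * l) * x ^ (n - 2 * l) * h (2 * l) : ℝ) -
          Complex.I * (∑ l ∈ range (n + 1) with 2 * l + 1 ≤ n,
            (-1) ^ l * n.choose (2 * l + 1) * x ^ (n - 1 - 2 * l) * h (2 * l + 1) : ℝ)) := by
  have hI : ∀ l ≤ n, (Complex.I * x) ^ (n - l) = Complex.I ^ n * (-Complex.I) ^ l * x ^ (n - l) :=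
    fun l hl => by
      obtain ⟨m, rfl⟩ := Nat.exists_eq_add_of_le hl
      rw [add_tsub_cancel_left, mul_pow, pow_add, mul_right_comm (_ ^ l), ← mul_pow _ _ l]
      simp
  have heven (l : ℕ) : (-Complex.I) ^ (2 * l) = (-1) ^ l := by simp [pow_mul]
  rw [sum_range_succ_eq_sum_even_add_sum_odd, mul_sub, sub_eq_add_neg]
  push_cast
  congr 1
  · rw [mul_sum]
    refine sum_congr rfl fun l hl => ?_
    rw [hI _ (mem_filter.mp hl).2, heven]
    ring
  · rw [mul_sum, mul_sum, ← sum_neg_distrib]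
    refine sum_congr rfl fun l hl => ?_
    rw [hI _ (mem_filter.mp hl).2, pow_succ, heven, tsub_add_eq_tsub_tsub_swap]
    ring

theorem gbinomR_natCast (n k : ℕ) : gbinomR n k = n.choose k := by
  rw [gbinomR, Nat.cast_choose_eq_descPochhammer_div, descPochhammer_eval_eq_prod_range]

theorem neg_one_pow_mul_Gamma_div_factorial {α : ℝ} (hα : -1 < α) (k : ℕ) :
    (-1) ^ k * (Real.Gamma (k + 1 + α) / k.factorial) =
      Real.Gamma (1 + α) * gbinomR (-1 - α) k := by
  have hprod : (-1) ^ k * Real.Gamma (k + 1 + α) =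
      Real.Gamma (1 + α) * ∏ i ∈ range k, (-1 - α - i) := by
    induction k with
    | zero => simp
    | succ k ih =>
      rw [prod_range_succ, ← mul_assoc, ← ih, Nat.cast_succ, add_right_comm _ 1 α,
        Real.Gamma_add_one (by linarith [k.cast_nonneg (α := ℝ)] : 0 < k + 1 + α).ne']
      ring
  rw [gbinomR, ← mul_div_assoc, hprod, mul_div_assoc]

theorem sum_choose_mul_gbinomR_mul_one_add_pow (α : ℝ) (n : ℕ) (z : ℂ) :
    ∑ k ∈ range (n + 1), n.choose k * ((gbinomR (-1 - α) k : ℂ) * 2 ^ k) * (1 + z) ^ (n - k) =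
      ∑ l ∈ range (n + 1), n.choose l * z ^ (n - l) * HR α l := by
  rw [sum_choose_mul_add_pow]
  simp [HR, gbinomR_natCast, mul_assoc]

theorem christov_eq_sum (n : ℕ) (x : ℝ) :
    christov n x = ∑ k ∈ range (n + 1),
      (-2) ^ k * n.choose k * (1 + Complex.I * x) ^ (-((k + 1 : ℝ) : ℂ)) := by
  have hs := Complex.slitPlane_ne_zero (one_add_I_mul_mem_slitPlane x)
  have hnum : Complex.I * x - 1 = -2 + (1 + Complex.I * x) := by ring
  rw [christov, add_comm _ (1 : ℂ), hnum, zpow_natCast, add_pow, sum_div]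
  refine sum_congr rfl fun k hk => ?_
  obtain ⟨m, rfl⟩ := Nat.exists_eq_add_of_le (mem_range_succ_iff.mp hk)
  have hcpow : (1 + Complex.I * x) ^ (-((k + 1 : ℝ) : ℂ)) = ((1 + Complex.I * x) ^ (k + 1))⁻¹ := by
    rw [Complex.cpow_neg, ← Complex.cpow_natCast]
    push_cast
    rfl
  have hden : (1 + Complex.I * x) ^ (k + m + 1) =
      (1 + Complex.I * x) ^ m * (1 + Complex.I * x) ^ (k + 1) := by ring
  rw [hcpow, ← Nat.cast_succ, zpow_natCast, add_tsub_cancel_left, Nat.succ_eq_add_one, hden]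
  field_simp

theorem differentiable_christov (n : ℕ) : Differentiable ℝ (christov n) := by
  simp only [funext (christov_eq_sum n)]
  exact Differentiable.fun_sum fun k _ y =>
    (hasDerivAt_one_add_I_mul_cpow _ y).differentiableAt.const_mul _

theorem hasFracLapAt_christov {α : ℝ} (hα : α ∈ Set.Ioo (0 : ℝ) 2) (n : ℕ) (x : ℝ) :
    HasFracLapAt α (christov n)
      (Real.Gamma (1 + α) * (1 + Complex.I * x) ^ (-((n + 1 + α : ℝ) : ℂ)) *
        ∑ l ∈ range (n + 1), n.choose l * (Complex.I * x) ^ (n - l) * HR α l) x := by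
  have hs := Complex.slitPlane_ne_zero (one_add_I_mul_mem_slitPlane x)
  have hdiff (k : ℕ) : Differentiable ℝ fun y : ℝ =>
      (1 + Complex.I * y) ^ (-((k + 1 : ℝ) : ℂ)) :=
    fun y => (hasDerivAt_one_add_I_mul_cpow _ y).differentiableAt
  have hpow (k : ℕ) := (hasFracLapAt_one_add_I_mul_cpow (p := k + 1) hα (by positivity) x).clm_comp
    (hdiff k) (ContinuousLinearMap.mul ℝ ℂ ((-2) ^ k * n.choose k))
  have hsum := HasFracLapAt.sum (s := range (n + 1)) (fun k _ => hpow k)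
    fun k _ => (hdiff k).const_mul _
  simp only [ContinuousLinearMap.mul_apply', ← christov_eq_sum] at hsum
  convert hsum using 1
  rw [← sum_choose_mul_gbinomR_mul_one_add_pow, mul_sum]
  refine sum_congr rfl fun k hk => ?_
  have hsplit : (1 + Complex.I * x) ^ (-((k + 1 + α : ℝ) : ℂ)) =
      (1 + Complex.I * x) ^ (-((n + 1 + α : ℝ) : ℂ)) * (1 + Complex.I * x) ^ (n - k) := by
    rw [← Complex.cpow_natCast, ← Complex.cpow_add _ _ hs,
      Nat.cast_sub (mem_range_succ_iff.mp hk)]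
    congr 1
    push_cast
    ring
  have hΓ := congrArg ((↑) : ℝ → ℂ) (neg_one_pow_mul_Gamma_div_factorial (by linarith [hα.1]) k)
  push_cast at hΓ
  rw [hsplit, Real.Gamma_nat_eq_factorial, neg_pow]
  push_cast
  linear_combination -(2 : ℂ) ^ k * n.choose k * (1 + Complex.I * x) ^ (-((n + 1 + α) : ℂ)) *
    (1 + Complex.I * x) ^ (n - k) * hΓ

theorem arg_one_add_I_mul (x : ℝ) : Complex.arg (1 + Complex.I * x) = Real.arctan x := by
  rw [Complex.arg_of_re_nonneg (by simp), norm_one_add_I_mul, Real.arctan_eq_arcsin]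
  simp

theorem one_add_I_mul_cpow_neg (b x : ℝ) :
    (1 + Complex.I * x) ^ (-(b : ℂ)) = (((1 + x ^ 2) ^ (b / 2))⁻¹ : ℝ) *
      Complex.exp (-(b * Real.arctan x : ℝ) * Complex.I) := by
  have hpos : 0 ≤ 1 + x ^ 2 := by positivity
  rw [← Complex.ofReal_neg, Complex.cpow_ofReal, norm_one_add_I_mul, arg_one_add_I_mul,
    Real.sqrt_eq_rpow, ← Real.rpow_mul hpos, ← Real.rpow_neg hpos, Complex.exp_mul_I,
    ← Complex.ofReal_neg, ← Complex.ofReal_cos, ← Complex.ofReal_sin]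
  ring_nf

theorem I_pow_mul_one_add_I_mul_cpow_neg (α x : ℝ) (n : ℕ) :
    Complex.I ^ n * (1 + Complex.I * x) ^ (-((n + 1 + α : ℝ) : ℂ)) =
      -Complex.I * ((1 + x ^ 2) ^ ((n + 1 + α) / 2) : ℝ)⁻¹ *
        Complex.exp (((n + 1 + α) * arccot x - Real.pi * α / 2 : ℝ) * Complex.I) := by
  have hI : Complex.I ^ (n + 1) = Complex.exp ((n + 1) * (Real.pi / 2 * Complex.I)) := by
    rw [← Nat.cast_succ, Complex.exp_nat_mul, Complex.exp_pi_div_two_mul_I]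
  have hI' : Complex.I ^ n = -Complex.I * Complex.I ^ (n + 1) := by simp [pow_succ', ← mul_assoc]
  rw [one_add_I_mul_cpow_neg, hI', hI, mul_mul_mul_comm, ← Complex.exp_add]
  congr 2
  rw [arccot]
  push_cast
  ring

theorem hasFracLapAt_SC {α : ℝ} (hα : α ∈ Set.Ioo (0 : ℝ) 2) (n : ℕ) (x : ℝ) :
    HasFracLapAt α (SC n)
      (Real.Gamma (1 + α) / (1 + x ^ 2) ^ ((n + 1 + α) / 2) *
        (Real.cos ((n + 1 + α) * arccot x - Real.pi * α / 2) *
          ∑ l ∈ range (n + 1) with 2 * l ≤ n,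
            (-1) ^ l * n.choose (2 * l) * x ^ (n - 2 * l) * HR α (2 * l) +
        Real.sin ((n + 1 + α) * arccot x - Real.pi * α / 2) *
          ∑ l ∈ range (n + 1) with 2 * l + 1 ≤ n,
            (-1) ^ l * n.choose (2 * l + 1) * x ^ (n - 1 - 2 * l) * HR α (2 * l + 1))) x := by
  have hSC : SC n = fun y => (-Complex.imCLM) (christov n y) := rfl
  rw [hSC]
  convert (hasFracLapAt_christov hα n x).clm_comp (differentiable_christov n)
    (-Complex.imCLM) using 1
  rw [sum_choose_mul_I_mul_pow, mul_assoc, ← mul_assoc (_ ^ _), mul_comm (_ ^ _) (Complex.I ^ n),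
    I_pow_mul_one_add_I_mul_cpow_neg, Complex.exp_mul_I, ← Complex.ofReal_cos, ← Complex.ofReal_sin]
  generalize Real.cos _ = c, Real.sin _ = s, (1 + x ^ 2) ^ ((n + 1 + α) / 2) = r,
    Finset.sum {l ∈ range (n + 1) | 2 * l ≤ n} (_ : ℕ → ℝ) = P,
    Finset.sum {l ∈ range (n + 1) | 2 * l + 1 ≤ n} (_ : ℕ → ℝ) = Q
  simp
  ring

theorem fracLap_SC (α : ℝ) (hα : α ∈ Set.Ioo (0 : ℝ) 2) (n : ℕ) (x : ℝ) :
    IntegrableOn (fun y : ℝ => (SC' n (x - y) - SC' n (x + y)) * y ^ (-α)) (Set.Ioi 0) ∧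
    (cFrac α / α) * ∫ y in Set.Ioi (0 : ℝ), (SC' n (x - y) - SC' n (x + y)) * y ^ (-α) =
      (Real.Gamma (1 + α) / (1 + x ^ 2) ^ (((n : ℝ) + 1 + α) / 2)) *
          Real.cos (((n : ℝ) + 1 + α) * arccot x - Real.pi * α / 2) *
          ∑ l ∈ (Finset.range (n + 1)).filter (fun l => 2 * l ≤ n),
            (-1 : ℝ) ^ l * gbinomR (n : ℝ) (2 * l) * x ^ (n - 2 * l) * HR α (2 * l)
        + (Real.Gamma (1 + α) / (1 + x ^ 2) ^ (((n : ℝ) + 1 + α) / 2)) *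
          Real.sin (((n : ℝ) + 1 + α) * arccot x - Real.pi * α / 2) *
          ∑ l ∈ (Finset.range (n + 1)).filter (fun l => 2 * l + 1 ≤ n),
            (-1 : ℝ) ^ l * gbinomR (n : ℝ) (2 * l + 1) * x ^ (n - 1 - 2 * l) *
              HR α (2 * l + 1) := by
  obtain ⟨hint, hval⟩ := hasFracLapAt_SC hα n x
  simp only [smul_eq_mul, mul_comm (_ ^ (-α))] at hint hval
  refine ⟨hint, hval.trans ?_⟩
  simp only [gbinomR_natCast]
  ring
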